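/- arXiv:2601.03931 — 3 statements merged into one kernel-verified Lean document; each statement's English description precedes it below -/
import Mathlib

section
/- Let q₁, q₂, c, e be nonnegative real numbers, set q_max = max{q₁, q₂}, and assume q_max < 1 and c < (1 − q_max)² / (e + 2(1 − q_max)). Then μ₁ := (q₁ + q₂ + 2c + √((q₁−q₂)² + 4c(e+c)))/2 < 1. -/
/-!
Both roots of a monic real-rooted quadratic are less than `r` exactly when its value at `r` is
positive and its vertex lies to the left of `r`. For the characteristic polynomial of the
contraction matrix, written in the gaps `pᵢ = r - qᵢ`, the value at `r` is
`p₁ * p₂ - c * (e + p₁ + p₂)`. So `μ₁ < r` says that `c` is below `p₁ * p₂ / (e + p₁ + p₂)`, a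
quantity increasing in each gap; replacing both gaps by the smaller one gives the bound in terms of
`q_max`.
-/

/-- If the discriminant of `X ^ 2 - t * X + d` is negative, `√` returns `0` and the quotient is
the common real part of the two complex roots. -/
theorem larger_root_lt_iff {t d r : ℝ} :
    (t + √(t ^ 2 - 4 * d)) / 2 < r ↔ t < 2 * r ∧ 0 < r ^ 2 - t * r + d := by
  have sqrt_lt_iff (ht : t < 2 * r) :
      √(t ^ 2 - 4 * d) < 2 * r - t ↔ 0 < r ^ 2 - t * r + d := by
    rw [Real.sqrt_lt' (sub_pos.2 ht)]
    constructor <;> intro h <;> linarith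
  constructor
  · intro h
    have ht : t < 2 * r := by linarith [Real.sqrt_nonneg (t ^ 2 - 4 * d)]
    exact ⟨ht, (sqrt_lt_iff ht).1 (by linarith)⟩
  · rintro ⟨ht, h⟩
    linarith [(sqrt_lt_iff ht).2 h]

/-- The critical value of the remainder bound `c`, below which the larger eigenvalue of
`[[q₁ + c, c], [e + c, q₂ + c]]` stays below a level `r`, as a function of `e` and of the gaps
`pᵢ = r - qᵢ`. The notion is meaningful for `pᵢ > 0` and `e + pᵢ ≥ 0`. -/
noncomputable def criticalRemainder (e p₁ p₂ : ℝ) : ℝ :=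
  p₁ * p₂ / (e + p₁ + p₂)

theorem criticalRemainder_comm (e p₁ p₂ : ℝ) :
    criticalRemainder e p₁ p₂ = criticalRemainder e p₂ p₁ := by
  rw [criticalRemainder, criticalRemainder, mul_comm, add_right_comm]

theorem criticalRemainder_self (e p : ℝ) : criticalRemainder e p p = p ^ 2 / (e + 2 * p) := by
  rw [criticalRemainder, ← sq, add_assoc, ← two_mul]

theorem criticalRemainder_le_left {e p₁ p₂ : ℝ} (hp₁ : 0 ≤ p₁) (hp₂ : 0 ≤ p₂)
    (he : 0 ≤ e + p₁) : criticalRemainder e p₁ p₂ ≤ p₁ :=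
  div_le_of_le_mul₀ (add_nonneg he hp₂) hp₁ <|
    mul_le_mul_of_nonneg_left (le_add_of_nonneg_left he) hp₁

theorem criticalRemainder_mono_left {e p p' k : ℝ} (hp : 0 < p) (hk : 0 ≤ k) (he : 0 ≤ e + k)
    (hpp' : p ≤ p') : criticalRemainder e p k ≤ criticalRemainder e p' k := by
  rw [criticalRemainder, criticalRemainder, div_le_div_iff₀ (by linarith) (by linarith),
    ← sub_nonneg]
  calc
    0 ≤ k * (p' - p) * (e + k) := mul_nonneg (mul_nonneg hk (sub_nonneg.2 hpp')) he
    _ = p' * k * (e + p + k) - p * k * (e + p' + k) := by ring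

theorem criticalRemainder_mono {e p₁ p₂ p₁' p₂' : ℝ} (hp₁ : 0 < p₁) (hp₂ : 0 < p₂)
    (he₁ : 0 ≤ e + p₁) (he₂ : 0 ≤ e + p₂) (h₁ : p₁ ≤ p₁') (h₂ : p₂ ≤ p₂') :
    criticalRemainder e p₁ p₂ ≤ criticalRemainder e p₁' p₂' :=
  calc
    criticalRemainder e p₁ p₂ ≤ criticalRemainder e p₁' p₂ :=
      criticalRemainder_mono_left hp₁ hp₂.le he₂ h₁
    _ = criticalRemainder e p₂ p₁' := criticalRemainder_comm ..
    _ ≤ criticalRemainder e p₂' p₁' :=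
      criticalRemainder_mono_left hp₂ (hp₁.le.trans h₁) (by linarith) h₂
    _ = criticalRemainder e p₁' p₂' := criticalRemainder_comm ..

theorem larger_eigenvalue_lt_iff {q₁ q₂ c e r : ℝ} (hq₁ : q₁ < r) (hq₂ : q₂ < r)
    (he₁ : q₁ ≤ r + e) (he₂ : q₂ ≤ r + e) :
    (q₁ + q₂ + 2 * c + √((q₁ - q₂) ^ 2 + 4 * c * (e + c))) / 2 < r ↔
      c < criticalRemainder e (r - q₁) (r - q₂) := by
  have discr_eq : (q₁ - q₂) ^ 2 + 4 * c * (e + c) =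
      (q₁ + q₂ + 2 * c) ^ 2 - 4 * ((q₁ + c) * (q₂ + c) - c * (e + c)) := by ring
  have charpoly_eq : r ^ 2 - (q₁ + q₂ + 2 * c) * r + ((q₁ + c) * (q₂ + c) - c * (e + c)) =
      (r - q₁) * (r - q₂) - c * (e + (r - q₁) + (r - q₂)) := by ring
  have charpoly_pos_iff : 0 < (r - q₁) * (r - q₂) - c * (e + (r - q₁) + (r - q₂)) ↔
      c < criticalRemainder e (r - q₁) (r - q₂) := by
    rw [sub_pos, criticalRemainder, lt_div_iff₀ (by linarith)]
  rw [discr_eq, larger_root_lt_iff, charpoly_eq, charpoly_pos_iff, and_iff_right_iff_imp]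
  intro hc
  have hc₁ : c < r - q₁ := hc.trans_le <|
    criticalRemainder_le_left (by linarith) (by linarith) (by linarith)
  have hc₂ : c < r - q₂ := (criticalRemainder_comm e _ _ ▸ hc).trans_le <|
    criticalRemainder_le_left (by linarith) (by linarith) (by linarith)
  linarith

theorem larger_eigenvalue_lt_one_general {q₁ q₂ c e : ℝ} (hqmax : max q₁ q₂ < 1)
    (he : max q₁ q₂ ≤ 1 + e)
    (hcsmall : c < (1 - max q₁ q₂) ^ 2 / (e + 2 * (1 - max q₁ q₂))) :
    (q₁ + q₂ + 2 * c + √((q₁ - q₂) ^ 2 + 4 * c * (e + c))) / 2 < 1 := by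
  obtain ⟨hq₁, hq₂⟩ := max_lt_iff.1 hqmax
  obtain ⟨he₁, he₂⟩ := max_le_iff.1 he
  have gap_pos : 0 < 1 - max q₁ q₂ := sub_pos.2 hqmax
  have add_gap_nonneg : 0 ≤ e + (1 - max q₁ q₂) := by linarith
  rw [larger_eigenvalue_lt_iff hq₁ hq₂ he₁ he₂]
  calc
    c < criticalRemainder e (1 - max q₁ q₂) (1 - max q₁ q₂) :=
      hcsmall.trans_eq (criticalRemainder_self ..).symm
    _ ≤ criticalRemainder e (1 - q₁) (1 - q₂) :=
      criticalRemainder_mono gap_pos gap_pos add_gap_nonneg add_gap_nonneg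
        (sub_le_sub_left (le_max_left ..) 1) (sub_le_sub_left (le_max_right ..) 1)

/-- For nonnegative reals `q₁, q₂, c, e` with
`q_max := max{q₁, q₂} < 1` and `c < (1 − q_max)² / (e + 2(1 − q_max))`, the larger
eigenvalue `μ₁ = (q₁ + q₂ + 2c + √((q₁−q₂)² + 4c(e+c)))/2` of the `2×2` contraction
matrix is less than `1`. -/
theorem larger_eigenvalue_lt_one (q₁ q₂ c e : ℝ)
    (hq₁ : 0 ≤ q₁) (hq₂ : 0 ≤ q₂) (hc : 0 ≤ c) (he : 0 ≤ e)
    (hqmax : max q₁ q₂ < 1)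
    (hcsmall : c < (1 - max q₁ q₂) ^ 2 / (e + 2 * (1 - max q₁ q₂))) :
    (q₁ + q₂ + 2 * c + Real.sqrt ((q₁ - q₂) ^ 2 + 4 * c * (e + c))) / 2 < 1 := by
  exact larger_eigenvalue_lt_one_general hqmax (by linarith) hcsmall
end

section
/- Let A be a 2×2 real matrix with all entries nonnegative, and let μ₁, μ₂ be real numbers with 0 < μ₂ < μ₁ < 1, trace(A) = μ₁ + μ₂, and det(A) = μ₁·μ₂ (so μ₁, μ₂ are the eigenvalues of A). Let v ∈ ℝ² have nonnegative entries. Then for every natural number t ≥ 1 and each index i ∈ {1,2}, the i-th entry of A^t·v satisfies (A^t·v)ᵢ ≤ max{μ₁²/(μ₁−μ₂), 1} · (A·v)ᵢ. -/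
open Matrix

/-! By Cayley–Hamilton `A² = (μ₁ + μ₂) A - μ₁ μ₂`, so every power of `A` is a combination of `A` and
`1`: `A ^ (n + 1) = h_{n+1} A - μ₁ μ₂ h_n`, where `h_n = ∑_{i + j = n - 1} μ₁ ^ i μ₂ ^ j ≥ 0`. On a
nonnegative vector the second term can only help, which leaves `A ^ (n + 1) v ≤ h_{n+1} A v`. The
constant comes from `h_1 = 1` and, for `n ≥ 1`, from
`(μ₁ - μ₂) h_{n+1} = μ₁ ^ (n + 1) - μ₂ ^ (n + 1) ≤ μ₁²`. -/

theorem sq_eq_trace_smul_sub_det_smul_one {R : Type*} [CommRing R]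
    (A : Matrix (Fin 2) (Fin 2) R) : A ^ 2 = A.trace • A - A.det • 1 := by
  nontriviality R
  have cayley_hamilton := A.aeval_self_charpoly
  rw [charpoly_fin_two] at cayley_hamilton
  simp only [map_add, map_sub, map_mul, map_pow, Polynomial.aeval_X, Polynomial.aeval_C,
    Algebra.algebraMap_eq_smul_one, smul_one_mul] at cayley_hamilton
  rwa [sub_add, sub_eq_zero] at cayley_hamilton

theorem pow_succ_eq_geom_sum₂_smul_sub {R S : Type*} [CommRing R] [Ring S] [Algebra R S]
    {a : S} {x y : R} (ha : a ^ 2 = (x + y) • a - (x * y) • 1) (n : ℕ) :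
    a ^ (n + 1) = (∑ i ∈ Finset.range (n + 1), x ^ i * y ^ (n - i)) • a -
      (x * y * ∑ i ∈ Finset.range n, x ^ i * y ^ (n - 1 - i)) • 1 := by
  induction n with
  | zero => simp
  | succ n ih =>
    rw [pow_succ, ih, sub_mul, smul_mul_assoc, smul_mul_assoc, one_mul, ← sq, ha,
      geom_sum₂_succ_eq x y (n := n + 1), Nat.add_sub_cancel, geom_sum₂_succ_eq]
    module

theorem pow_succ_smul_le_geom_sum₂_smul {R S E : Type*} [CommRing R] [PartialOrder R]
    [IsOrderedRing R] [Ring S] [Algebra R S] [AddCommGroup E] [PartialOrder E]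
    [IsOrderedAddMonoid E] [Module R E] [Module S E] [IsScalarTower R S E] [PosSMulMono R E]
    {a : S} {x y : R} (hx : 0 ≤ x) (hy : 0 ≤ y) (ha : a ^ 2 = (x + y) • a - (x * y) • 1)
    {v : E} (hv : 0 ≤ v) (n : ℕ) :
    a ^ (n + 1) • v ≤ (∑ i ∈ Finset.range (n + 1), x ^ i * y ^ (n - i)) • a • v := by
  have coeff_nonneg : 0 ≤ x * y * ∑ i ∈ Finset.range n, x ^ i * y ^ (n - 1 - i) :=
    mul_nonneg (mul_nonneg hx hy) (Finset.sum_nonneg fun _ _ ↦ by positivity)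
  rw [pow_succ_eq_geom_sum₂_smul_sub ha, sub_smul, smul_assoc, smul_assoc, one_smul]
  exact sub_le_self _ (smul_nonneg coeff_nonneg hv)

theorem geom_sum₂_le_max_sq_div_sub {K : Type*} [Field K] [LinearOrder K]
    [IsStrictOrderedRing K] {x y : K} (hy : 0 ≤ y) (hyx : y < x) (hx : x ≤ 1) (n : ℕ) :
    ∑ i ∈ Finset.range (n + 1), x ^ i * y ^ (n - i) ≤ max (x ^ 2 / (x - y)) 1 := by
  cases n with
  | zero => simp
  | succ n =>
    refine le_max_of_le_left ((le_div_iff₀ (sub_pos.2 hyx)).2 ?_)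
    calc (∑ i ∈ Finset.range (n + 2), x ^ i * y ^ (n + 1 - i)) * (x - y)
        = x ^ (n + 2) - y ^ (n + 2) := geom_sum₂_mul x y (n + 2)
      _ ≤ x ^ (n + 2) := sub_le_self _ (pow_nonneg hy _)
      _ ≤ x ^ 2 := pow_le_pow_of_le_one (hy.trans hyx.le) hx (Nat.le_add_left 2 n)

theorem matrix_power_entrywise_bound_general {K S E : Type*} [Field K] [LinearOrder K]
    [IsStrictOrderedRing K] [Ring S] [Algebra K S] [AddCommGroup E] [PartialOrder E]
    [IsOrderedAddMonoid E] [Module K E] [Module S E] [IsScalarTower K S E] [IsOrderedModule K E]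
    {a : S} {μ₁ μ₂ : K} (hμ₂ : 0 ≤ μ₂) (hμ₂₁ : μ₂ < μ₁) (hμ₁ : μ₁ ≤ 1)
    (ha : a ^ 2 = (μ₁ + μ₂) • a - (μ₁ * μ₂) • 1) {v : E} (hv : 0 ≤ v) (hav : 0 ≤ a • v)
    {t : ℕ} (ht : 1 ≤ t) :
    a ^ t • v ≤ max (μ₁ ^ 2 / (μ₁ - μ₂)) 1 • a • v := by
  obtain ⟨n, rfl⟩ := Nat.exists_eq_add_of_le' ht
  exact (pow_succ_smul_le_geom_sum₂_smul (hμ₂.trans hμ₂₁.le) hμ₂ ha hv n).trans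
    (smul_le_smul_of_nonneg_right (geom_sum₂_le_max_sq_div_sub hμ₂ hμ₂₁ hμ₁ n) hav)

-- Makes `A • v` available, definitionally equal to `A *ᵥ v`.
open scoped Matrix.Module

/-- Let `A` be a `2×2` real matrix with nonnegative entries whose
eigenvalues `μ₁, μ₂` satisfy `0 < μ₂ < μ₁ < 1` (expressed via `trace A = μ₁ + μ₂` and
`det A = μ₁·μ₂`), and let `v ∈ ℝ²` have nonnegative entries. Then for every `t ≥ 1` and
each index `i`, `(A^t·v)ᵢ ≤ max{μ₁²/(μ₁−μ₂), 1} · (A·v)ᵢ`. -/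
theorem matrix_power_entrywise_bound (A : Matrix (Fin 2) (Fin 2) ℝ)
    (hA : ∀ i j, 0 ≤ A i j)
    (μ₁ μ₂ : ℝ) (hμ₂pos : 0 < μ₂) (hμ₂₁ : μ₂ < μ₁) (hμ₁lt : μ₁ < 1)
    (htr : A.trace = μ₁ + μ₂) (hdet : A.det = μ₁ * μ₂)
    (v : Fin 2 → ℝ) (hv : ∀ i, 0 ≤ v i)
    (t : ℕ) (ht : 1 ≤ t) (i : Fin 2) :
    ((A ^ t) *ᵥ v) i ≤ max (μ₁ ^ 2 / (μ₁ - μ₂)) 1 * (A *ᵥ v) i := by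
  have hsq : A ^ 2 = (μ₁ + μ₂) • A - (μ₁ * μ₂) • 1 :=
    htr ▸ hdet ▸ sq_eq_trace_smul_sub_det_smul_one A
  have hAv : 0 ≤ A • v := fun j ↦ dotProduct_nonneg_of_nonneg (hA j) hv
  exact matrix_power_entrywise_bound_general hμ₂pos.le hμ₂₁ hμ₁lt.le hsq hv hAv ht i
end

section
/- Let c : ℝⁿ → ℝ^q be twice continuously differentiable, and for y ∈ ℝⁿ let J(y) denote the q×n Jacobian matrix of c at y (so J(y)ᵢⱼ = ∂cᵢ/∂yⱼ(y)). Let x ∈ ℝⁿ be such that J(x)·J(x)ᵀ is invertible, let u ∈ ℝⁿ, and let v ∈ ℝⁿ satisfy J(x)·v = 0. Then the map y ↦ (Iₙ − J(y)ᵀ·(J(y)·J(y)ᵀ)⁻¹·J(y))·v is differentiable at x, and its derivative at x in the direction u equals −J(x)ᵀ·(J(x)·J(x)ᵀ)⁻¹·(D_uJ(x))·v, where D_uJ(x) is the q×n matrix obtained as the directional derivative of y ↦ J(y) at x along u (whose i-th row is uᵀ·∇²cᵢ(x)). -/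
open Matrix

/-!
Write `A(y) = J(y)ᵀ(J(y)J(y)ᵀ)⁻¹`. The projector applied to `v` is `v - A(y)(J(y)v)`, and the factor
`J(y)v` vanishes at `x`. So the product rule has no term in which `A` is differentiated: continuity
of `A` at `x` already gives the derivative `-A(x)(DJ(x)[u])v`.
-/

section Calculus

open Asymptotics Topology

variable {𝕜 E F G : Type*} [NontriviallyNormedField 𝕜]
  [NormedAddCommGroup E] [NormedSpace 𝕜 E] [NormedAddCommGroup F] [NormedSpace 𝕜 F]
  [NormedAddCommGroup G] [NormedSpace 𝕜 G]

theorem differentiable_fderiv_apply_const {f : E → F} (hf : ContDiff 𝕜 2 f) (e : E) :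
    Differentiable 𝕜 fun y => fderiv 𝕜 f y e :=
  ((hf.fderiv_right (m := 1) (by norm_num)).differentiable one_ne_zero).clm_apply
    (differentiable_const e)

theorem hasFDerivAt_clm_apply_of_continuousAt_of_eq_zero {A : E → F →L[𝕜] G} {w : E → F}
    {w' : E →L[𝕜] F} {x : E} (hA : ContinuousAt A x) (hw : HasFDerivAt w w' x)
    (hwx : w x = 0) :
    HasFDerivAt (fun y => A y (w y)) (A x ∘L w') x := by
  have hA_sub : (fun y => ‖A y - A x‖) =o[𝓝 x] fun _ => (1 : ℝ) :=
    ((isLittleO_one_iff ℝ).2 (tendsto_sub_nhds_zero_iff.2 hA)).norm_left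
  have hw_bound : (fun y => ‖w y‖) =O[𝓝 x] fun y => ‖y - x‖ := by
    simpa only [hwx, sub_zero] using hw.isBigO_sub.norm_norm
  have h_error : HasFDerivAt (fun y => (A y - A x) (w y)) (0 : E →L[𝕜] G) x := by
    refine .of_isLittleO ?_
    simp only [hwx, map_zero, sub_zero, _root_.zero_apply]
    refine IsBigO.trans_isLittleO (.of_norm_le fun y => (A y - A x).le_opNorm (w y)) ?_
    simpa only [one_mul, isLittleO_norm_right] using hA_sub.mul_isBigO hw_bound
  simpa only [_root_.sub_apply, Function.comp_apply, add_sub_cancel, add_zero] using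
    ((A x).hasFDerivAt.comp x hw).fun_add h_error

end Calculus

section MatrixField

theorem continuousAt_transpose_mul_inv {X m n K : Type*} [TopologicalSpace X] [Fintype m]
    [DecidableEq m] [Fintype n] [Field K] [TopologicalSpace K] [IsTopologicalDivisionRing K]
    {J : X → Matrix m n K} {x : X} (hJ : ContinuousAt J x) (hinv : IsUnit (J x * (J x)ᵀ)) :
    ContinuousAt (fun y => (J y)ᵀ * (J y * (J y)ᵀ)⁻¹) x := by
  have hdet : (J x * (J x)ᵀ).det ≠ 0 := ((isUnit_iff_isUnit_det _).1 hinv).ne_zero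
  have hinv_cont : ContinuousAt Inv.inv (J x * (J x)ᵀ) :=
    continuousAt_matrix_inv _ (by simpa only [Ring.inverse_eq_inv'] using continuousAt_inv₀ hdet)
  have hgram : ContinuousAt (fun y => J y * (J y)ᵀ) x :=
    (continuous_id.matrix_mul continuous_id.matrix_transpose).continuousAt.comp hJ
  have hmul : Continuous fun p : Matrix m n K × Matrix m m K => p.1ᵀ * p.2 :=
    continuous_fst.matrix_transpose.matrix_mul continuous_snd
  exact hmul.continuousAt.comp (hJ.prodMk (hinv_cont.comp_of_eq hgram rfl))

variable {𝕜 E l m n : Type*} [NontriviallyNormedField 𝕜] [NormedAddCommGroup E] [NormedSpace 𝕜 E]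
  [Fintype m] [Fintype n]

theorem hasFDerivAt_mulVec_const [Finite l] {J : E → Matrix l n 𝕜} {x : E}
    (hJ : ∀ i j, DifferentiableAt 𝕜 (fun y => J y i j) x) (v : n → 𝕜) :
    HasFDerivAt (fun y => J y *ᵥ v)
      (ContinuousLinearMap.pi fun i => ∑ j, v j • fderiv 𝕜 (fun y => J y i j) x) x := by
  have := Fintype.ofFinite l
  exact hasFDerivAt_pi.2 fun i =>
    HasFDerivAt.fun_sum fun j _ => (hJ i j).hasFDerivAt.mul_const (v j)

variable [CompleteSpace 𝕜]

theorem hasFDerivAt_mulVec_of_continuousAt_of_eq_zero [Finite l] {A : E → Matrix l m 𝕜}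
    {w : E → m → 𝕜} {w' : E →L[𝕜] m → 𝕜} {x : E} (hA : ContinuousAt A x) (hw : HasFDerivAt w w' x)
    (hwx : w x = 0) :
    HasFDerivAt (fun y => A y *ᵥ w y) ((A x).mulVecLin.toContinuousLinearMap ∘L w') x := by
  classical
  have := Fintype.ofFinite l
  have htoCLM : Continuous fun M : Matrix l m 𝕜 => M.mulVecLin.toContinuousLinearMap :=
    (LinearMap.toContinuousLinearMap.toLinearMap ∘ₗ
      (toLin' (R := 𝕜) (m := l) (n := m)).toLinearMap).continuous_of_finiteDimensional
  exact hasFDerivAt_clm_apply_of_continuousAt_of_eq_zero (htoCLM.continuousAt.comp hA) hw hwx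

theorem hasFDerivAt_one_sub_mul_mulVec [DecidableEq n] {A : E → Matrix n m 𝕜}
    {J : E → Matrix m n 𝕜} {x : E} (hA : ContinuousAt A x)
    (hJ : ∀ i j, DifferentiableAt 𝕜 (fun y => J y i j) x) {v : n → 𝕜} (hv : J x *ᵥ v = 0) :
    HasFDerivAt (fun y => (1 - A y * J y) *ᵥ v)
      (-((A x).mulVecLin.toContinuousLinearMap ∘L
        ContinuousLinearMap.pi fun i => ∑ j, v j • fderiv 𝕜 (fun y => J y i j) x)) x := by
  simp only [sub_mulVec, one_mulVec, ← mulVec_mulVec]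
  exact (hasFDerivAt_mulVec_of_continuousAt_of_eq_zero hA
    (hasFDerivAt_mulVec_const hJ v) hv).const_sub v

theorem second_fundamental_form_level_set_general [DecidableEq m] [DecidableEq n]
    {J : E → Matrix m n 𝕜} {x : E} (hJ : ∀ i j, DifferentiableAt 𝕜 (fun y => J y i j) x)
    (hinv : IsUnit (J x * (J x)ᵀ)) (u : E) {v : n → 𝕜} (hv : J x *ᵥ v = 0) :
    DifferentiableAt 𝕜 (fun y => (1 - (J y)ᵀ * (J y * (J y)ᵀ)⁻¹ * J y) *ᵥ v) x ∧
    fderiv 𝕜 (fun y => (1 - (J y)ᵀ * (J y * (J y)ᵀ)⁻¹ * J y) *ᵥ v) x u =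
      -(((J x)ᵀ * (J x * (J x)ᵀ)⁻¹ *
          Matrix.of (fun i j => fderiv 𝕜 (fun y => J y i j) x u)) *ᵥ v) := by
  have hJ_cont : ContinuousAt J x :=
    continuousAt_pi.2 fun i => continuousAt_pi.2 fun j => (hJ i j).continuousAt
  have hderiv :=
    hasFDerivAt_one_sub_mul_mulVec (continuousAt_transpose_mul_inv hJ_cont hinv) hJ hv
  refine ⟨hderiv.differentiableAt, ?_⟩
  have hDJ_mulVec : (ContinuousLinearMap.pi fun i =>
      ∑ j, v j • fderiv 𝕜 (fun y => J y i j) x) u =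
      Matrix.of (fun i j => fderiv 𝕜 (fun y => J y i j) x u) *ᵥ v := by
    ext i
    simp [mulVec, dotProduct, mul_comm]
  rw [hderiv.fderiv, ← mulVec_mulVec, ← hDJ_mulVec]
  rfl

end MatrixField

/-- Let `c : ℝⁿ → ℝ^q` be twice continuously differentiable with
Jacobian matrix `J(y)` (so `J(y)ᵢⱼ = ∂cᵢ/∂yⱼ(y)`). Let `x` be such that `J(x)·J(x)ᵀ` is
invertible, let `u ∈ ℝⁿ`, and let `v ∈ ℝⁿ` with `J(x)·v = 0` (a tangent vector). Then
the map `y ↦ (Iₙ − J(y)ᵀ(J(y)J(y)ᵀ)⁻¹J(y))·v` (the tangent-space projector applied to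
`v`) is differentiable at `x`, and its derivative at `x` in direction `u` equals
`−J(x)ᵀ(J(x)J(x)ᵀ)⁻¹(D_u J(x))·v`, where `D_u J(x)` is the directional derivative of
`y ↦ J(y)` at `x` along `u` (taken entrywise). -/
theorem second_fundamental_form_level_set {n q : ℕ}
    (c : (Fin n → ℝ) → (Fin q → ℝ)) (hc : ContDiff ℝ 2 c)
    (J : (Fin n → ℝ) → Matrix (Fin q) (Fin n) ℝ)
    (hJ : ∀ y i j, J y i j = fderiv ℝ (fun z => c z i) y (Pi.single j 1))
    (x : Fin n → ℝ) (hinv : IsUnit (J x * (J x)ᵀ))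
    (u v : Fin n → ℝ) (hv : J x *ᵥ v = 0) :
    DifferentiableAt ℝ
      (fun y => ((1 : Matrix (Fin n) (Fin n) ℝ) - (J y)ᵀ * (J y * (J y)ᵀ)⁻¹ * J y) *ᵥ v) x ∧
    fderiv ℝ
      (fun y => ((1 : Matrix (Fin n) (Fin n) ℝ) - (J y)ᵀ * (J y * (J y)ᵀ)⁻¹ * J y) *ᵥ v) x u =
      -(((J x)ᵀ * (J x * (J x)ᵀ)⁻¹ *
          Matrix.of (fun i j => fderiv ℝ (fun y => J y i j) x u)) *ᵥ v) := by
  have hJ_diff (i : Fin q) (j : Fin n) : DifferentiableAt ℝ (fun y => J y i j) x := by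
    simpa only [hJ] using differentiable_fderiv_apply_const (contDiff_pi.1 hc i) (Pi.single j 1) x
  exact second_fundamental_form_level_set_general hJ_diff hinv u hv
end
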